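/- Let f(x) = (τ/2)·x² + σ·x + κ be a real quadratic polynomial with τ > 0, and let β ∈ 𝒮. Then there exists α ∈ 𝒮 with α′ − f′·α = β if and only if ∫_ℝ e^{−f(t)}·β(t) dt = 0. Consequently the linear functional β ↦ ∫_ℝ e^{−f}·β induces a linear isomorphism 𝒮 / d_f(𝒮) ≅ ℝ, i.e. the first cohomology of the twisted complex (𝒮 →^{d_f} 𝒮) is one-dimensional. -/

import Mathlib

open MeasureTheory

open Asymptotics Filter Set Topology
open scoped ContDiff SchwartzMap

/- The differential `d_f α = α' - f' α` is conjugate to the ordinary derivative: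
`e^{-f} · d_f α = (e^{-f} α)'`. Since `e^{-f}` is bounded, integrating over the line shows that the
range of `d_f` pairs to zero with `e^{-f}`. Conversely, `d_f α = β` is solved by
`α x = e^{f x} ∫_{t ≤ x} e^{-f t} β t`, which under the vanishing condition is also
`-e^{f x} ∫_{t > x} e^{-f t} β t`. For large `x` the weight `e^{f x - f t}` is at most
`e^{-c (t - x)}` for `t > x`, so `α` inherits the decay of `β` at `+∞`, and symmetrically at `-∞`.
The decay of the derivatives of `α` follows inductively from `α' = f' α + β`. -/

/-- A function decays rapidly if its product with every polynomial is bounded: the order-zero part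
of the Schwartz condition. The weight is `1 + ‖x‖`, as in `Function.HasTemperateGrowth`. -/
def RapidDecay {V E : Type*} [NormedAddCommGroup V] [NormedAddCommGroup E] (g : V → E) : Prop :=
  ∀ k : ℕ, ∃ C : ℝ, ∀ x, (1 + ‖x‖) ^ k * ‖g x‖ ≤ C

namespace RapidDecay

variable {V E : Type*} [NormedAddCommGroup V] [NormedAddCommGroup E] {g h : V → E}

theorem add (hg : RapidDecay g) (hh : RapidDecay h) : RapidDecay fun x => g x + h x := by
  intro k
  obtain ⟨C, hC⟩ := hg k
  obtain ⟨D, hD⟩ := hh k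
  refine ⟨C + D, fun x => ?_⟩
  calc (1 + ‖x‖) ^ k * ‖g x + h x‖ ≤ (1 + ‖x‖) ^ k * (‖g x‖ + ‖h x‖) := by
        gcongr
        exact norm_add_le _ _
    _ ≤ C + D := by
        rw [mul_add]
        exact add_le_add (hC x) (hD x)

theorem sum {ι : Type*} {s : Finset ι} {G : ι → V → E} (hG : ∀ i ∈ s, RapidDecay (G i)) :
    RapidDecay fun x => ∑ i ∈ s, G i x := by
  induction s using Finset.cons_induction with
  | empty => exact fun k => ⟨0, by simp⟩
  | cons i s hi ih =>
    simp only [Finset.sum_cons]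
    exact (hG i (Finset.mem_cons_self i s)).add
      (ih fun j hj => hG j (Finset.mem_cons_of_mem hj))

theorem comp_neg (hg : RapidDecay g) : RapidDecay fun x => g (-x) := fun k =>
  (hg k).imp fun _ hC x => by simpa using hC (-x)

theorem smul_of_norm_le [NormedSpace ℝ E] (hg : RapidDecay g) {q : V → ℝ} {C : ℝ} {m : ℕ}
    (hq : ∀ x, ‖q x‖ ≤ C * (1 + ‖x‖) ^ m) : RapidDecay fun x => q x • g x := by
  intro k
  have hC : 0 ≤ C := by simpa using (norm_nonneg _).trans (hq 0)
  obtain ⟨D, hD⟩ := hg (k + m)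
  refine ⟨C * D, fun x => ?_⟩
  calc (1 + ‖x‖) ^ k * ‖q x • g x‖ ≤ (1 + ‖x‖) ^ k * (C * (1 + ‖x‖) ^ m * ‖g x‖) := by
        rw [norm_smul]
        gcongr
        exact hq x
    _ = C * ((1 + ‖x‖) ^ (k + m) * ‖g x‖) := by ring
    _ ≤ C * D := by gcongr; exact hD x

end RapidDecay

section Bootstrap

variable {E : Type*} [NormedAddCommGroup E] [NormedSpace ℝ E]

theorem rapidDecay_iteratedDeriv_schwartzMap (β : 𝓢(ℝ, E)) (n : ℕ) :
    RapidDecay (iteratedDeriv n β) := fun k =>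
  ⟨_, fun x => by
    simpa only [norm_iteratedFDeriv_eq_norm_iteratedDeriv] using
      SchwartzMap.one_add_le_sup_seminorm_apply (𝕜 := ℝ) (m := (k, n)) le_rfl le_rfl β x⟩

theorem rapidDecay_schwartzMap (β : 𝓢(ℝ, E)) : RapidDecay β := by
  simpa only [iteratedDeriv_zero] using rapidDecay_iteratedDeriv_schwartzMap β 0

theorem exists_schwartzMap_coe_eq {g : ℝ → E} (hg : ContDiff ℝ ∞ g)
    (hdecay : ∀ n, RapidDecay (iteratedDeriv n g)) : ∃ α : 𝓢(ℝ, E), ⇑α = g := by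
  refine ⟨⟨g, hg, fun k n => (hdecay n k).imp fun C hC x => ?_⟩, rfl⟩
  rw [norm_iteratedFDeriv_eq_norm_iteratedDeriv]
  refine le_trans ?_ (hC x)
  gcongr
  simp

theorem rapidDecay_iteratedDeriv_smul {q : ℝ → ℝ} {g : ℝ → E} (hq : q.HasTemperateGrowth)
    (hg : ContDiff ℝ ∞ g) {n : ℕ} (hdecay : ∀ i ≤ n, RapidDecay (iteratedDeriv i g)) :
    RapidDecay (iteratedDeriv n (q • g)) := by
  have leibniz (x : ℝ) : iteratedDeriv n (q • g) x =
      ∑ i ∈ Finset.range (n + 1), (n.choose i : ℝ) • iteratedDeriv i q x •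
        iteratedDeriv (n - i) g x := by
    simp only [Nat.cast_smul_eq_nsmul, ← iteratedDerivWithin_univ]
    exact iteratedDerivWithin_smul (mem_univ x) uniqueDiffOn_univ
      ((contDiff_infty.1 hq.1 n).contDiffAt.contDiffWithinAt)
      ((contDiff_infty.1 hg n).contDiffAt.contDiffWithinAt)
  rw [funext leibniz]
  refine RapidDecay.sum fun i _ => ?_
  obtain ⟨m, C, hC⟩ := hq.2 i
  simp only [norm_iteratedFDeriv_eq_norm_iteratedDeriv] at hC
  exact ((hdecay (n - i) (Nat.sub_le n i)).smul_of_norm_le hC).smul_of_norm_le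
    (C := n.choose i) (m := 0) (by simp)

theorem exists_schwartzMap_coe_eq_of_deriv_eq {q : ℝ → ℝ} {g : ℝ → E} (β : 𝓢(ℝ, E))
    (hq : q.HasTemperateGrowth) (hg : ContDiff ℝ ∞ g) (hderiv : deriv g = q • g + β)
    (hdecay : RapidDecay g) : ∃ α : 𝓢(ℝ, E), ⇑α = g := by
  refine exists_schwartzMap_coe_eq hg fun n => ?_
  induction n using Nat.strong_induction_on with
  | _ n ih =>
    cases n with
    | zero => simpa only [iteratedDeriv_zero] using hdecay
    | succ n =>
      have hsplit (x : ℝ) : iteratedDeriv (n + 1) g x =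
          iteratedDeriv n (q • g) x + iteratedDeriv n β x := by
        rw [iteratedDeriv_succ', hderiv]
        exact iteratedDeriv_add ((contDiff_infty.1 (hq.1.smul hg) n).contDiffAt)
          (β.smooth n).contDiffAt
      rw [funext hsplit]
      exact (rapidDecay_iteratedDeriv_smul hq hg fun i hi => ih i (Nat.lt_succ_of_le hi)).add
        (rapidDecay_iteratedDeriv_schwartzMap β n)

theorem hasTemperateGrowth_deriv {g : ℝ → E} (hg : g.HasTemperateGrowth) :
    (deriv g).HasTemperateGrowth := by
  refine ⟨(contDiff_infty_iff_deriv.1 hg.1).2, fun n => ?_⟩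
  obtain ⟨k, C, hC⟩ := hg.2 (n + 1)
  refine ⟨k, C, fun x => ?_⟩
  simpa only [norm_iteratedFDeriv_eq_norm_iteratedDeriv, iteratedDeriv_succ'] using hC x

end Bootstrap

section TwistedDifferential

variable {E : Type*} [NormedAddCommGroup E] [NormedSpace ℝ E]

/-- The twisted (Witten) differential `d_f α = α' - f' α`, with the one-form `α dx` on the line
identified with the function `α`. -/
noncomputable def twistedDifferential (f : ℝ → ℝ) (α : ℝ → E) : ℝ → E :=
  fun x => deriv α x - deriv f x • α x

theorem hasDerivAt_exp_neg_smul {f : ℝ → ℝ} {α : ℝ → E} {x : ℝ} (hf : DifferentiableAt ℝ f x)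
    (hα : DifferentiableAt ℝ α x) :
    HasDerivAt (fun t => Real.exp (-f t) • α t)
      (Real.exp (-f x) • twistedDifferential f α x) x := by
  convert! hf.hasDerivAt.neg.exp.smul hα.hasDerivAt using 1
  simp only [twistedDifferential, Pi.neg_apply]
  module

/-- The solution of `d_f α = b` obtained by variation of constants from `-∞`. -/
noncomputable def twistedPrimitive (f : ℝ → ℝ) (b : ℝ → E) : ℝ → E :=
  fun x => Real.exp (f x) • ∫ t in Iic x, Real.exp (-f t) • b t

theorem hasDerivAt_integral_Iic [CompleteSpace E] {w : ℝ → E} (hw : Continuous w)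
    (hint : Integrable w) (x : ℝ) : HasDerivAt (fun y => ∫ t in Iic y, w t) (w x) x := by
  have hsplit (y : ℝ) : ∫ t in Iic y, w t = (∫ t in (0 : ℝ)..y, w t) + ∫ t in Iic 0, w t :=
    sub_eq_iff_eq_add.1 <|
      intervalIntegral.integral_Iic_sub_Iic hint.integrableOn hint.integrableOn
  rw [funext hsplit]
  exact (hw.integral_hasStrictDerivAt 0 x).hasDerivAt.add_const _

theorem hasDerivAt_twistedPrimitive [CompleteSpace E] {f : ℝ → ℝ} {b : ℝ → E}
    (hf : Differentiable ℝ f) (hb : Continuous b)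
    (hint : Integrable fun t => Real.exp (-f t) • b t) (x : ℝ) :
    HasDerivAt (twistedPrimitive f b) (deriv f x • twistedPrimitive f b x + b x) x := by
  have hcont : Continuous fun t => Real.exp (-f t) • b t :=
    (Real.continuous_exp.comp hf.continuous.neg).smul hb
  convert! (hf x).hasDerivAt.exp.smul (hasDerivAt_integral_Iic hcont hint x) using 1
  rw [smul_smul, ← Real.exp_add, add_neg_cancel, Real.exp_zero, one_smul, twistedPrimitive]
  module

theorem contDiff_twistedPrimitive [CompleteSpace E] {f : ℝ → ℝ} {b : ℝ → E}
    (hf : ContDiff ℝ ∞ f) (hb : ContDiff ℝ ∞ b)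
    (hint : Integrable fun t => Real.exp (-f t) • b t) :
    ContDiff ℝ ∞ (twistedPrimitive f b) := by
  have hsmooth : ContDiff ℝ ∞ fun t => Real.exp (-f t) • b t := hf.neg.exp.smul hb
  have hderiv (x : ℝ) := hasDerivAt_integral_Iic hsmooth.continuous hint x
  have hprimitive : ContDiff ℝ ∞ fun x => ∫ t in Iic x, Real.exp (-f t) • b t :=
    contDiff_infty_iff_deriv.2 ⟨fun x => (hderiv x).differentiableAt, by
      rwa [funext fun x => (hderiv x).deriv]⟩
  exact hf.exp.smul hprimitive

theorem twistedPrimitive_eq_neg_integral_Ioi {f : ℝ → ℝ} {b : ℝ → E}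
    (hint : Integrable fun t => Real.exp (-f t) • b t)
    (hzero : ∫ t, Real.exp (-f t) • b t = 0) (x : ℝ) :
    twistedPrimitive f b x = -(Real.exp (f x) • ∫ t in Ioi x, Real.exp (-f t) • b t) := by
  have hsplit :
      (∫ t in Iic x, Real.exp (-f t) • b t) + ∫ t in Ioi x, Real.exp (-f t) • b t = 0 := by
    rw [intervalIntegral.integral_Iic_add_Ioi hint.integrableOn hint.integrableOn, hzero]
  rw [twistedPrimitive, eq_neg_of_add_eq_zero_left hsplit, smul_neg]

end TwistedDifferential

section HalfLine

variable {E : Type*} [NormedAddCommGroup E] [NormedSpace ℝ E] {f : ℝ → ℝ} {b : ℝ → E} {c : ℝ}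

theorem mul_sub_le_sub_of_le_deriv_Ici {x y : ℝ} (hf : Differentiable ℝ f)
    (hc : ∀ t ≥ x, c ≤ deriv f t) (hxy : x ≤ y) : c * (y - x) ≤ f y - f x :=
  (convex_Ici x).mul_sub_le_image_sub_of_le_deriv hf.continuous.continuousOn hf.differentiableOn
    (fun t ht => hc t (interior_subset ht)) x self_mem_Ici y hxy hxy

theorem tendsto_atTop_of_eventually_le_deriv (hf : Differentiable ℝ f) (hc : 0 < c)
    (hderiv : ∀ᶠ x in atTop, c ≤ deriv f x) : Tendsto f atTop atTop := by
  obtain ⟨R, hR⟩ := eventually_atTop.1 hderiv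
  have hlin : Tendsto (fun x => c * (x - R) + f R) atTop atTop :=
    tendsto_atTop_add_const_right _ _ <|
      (tendsto_atTop_add_const_right atTop (-R) tendsto_id).const_mul_atTop hc
  refine tendsto_atTop_mono' _ ((eventually_ge_atTop R).mono fun x hx => ?_) hlin
  linarith [mul_sub_le_sub_of_le_deriv_Ici hf hR hx]

theorem norm_exp_smul_integral_Ioi_le {x B : ℝ} (hf : Differentiable ℝ f) (hc : 0 < c)
    (hderiv : ∀ t ≥ x, c ≤ deriv f t) (hb : ∀ t > x, ‖b t‖ ≤ B) :
    ‖Real.exp (f x) • ∫ t in Ioi x, Real.exp (-f t) • b t‖ ≤ B / c := by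
  have hbound : IntegrableOn (fun t => Real.exp (-c * t) * (Real.exp (c * x) * B)) (Ioi x) :=
    (integrableOn_exp_mul_Ioi (neg_lt_zero.2 hc) x).mul_const _
  rw [← integral_smul]
  calc ‖∫ t in Ioi x, Real.exp (f x) • Real.exp (-f t) • b t‖
      ≤ ∫ t in Ioi x, Real.exp (-c * t) * (Real.exp (c * x) * B) := by
        refine norm_integral_le_of_norm_le hbound ?_
        filter_upwards [ae_restrict_mem measurableSet_Ioi] with t ht
        have hexp : f x + -f t ≤ -c * t + c * x := by
          linarith [mul_sub_le_sub_of_le_deriv_Ici hf hderiv (le_of_lt ht)]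
        rw [smul_smul, ← Real.exp_add, norm_smul, Real.norm_of_nonneg (Real.exp_pos _).le,
          ← mul_assoc, ← Real.exp_add]
        gcongr
        exact hb t ht
    _ = Real.exp (-c * x) * Real.exp (c * x) * B / c := by
        rw [integral_mul_const, integral_exp_mul_Ioi (neg_lt_zero.2 hc)]
        field_simp
    _ = B / c := by
        rw [← Real.exp_add, neg_mul, neg_add_cancel, Real.exp_zero, one_mul]

theorem isBigO_atTop_pow_smul_exp_smul_integral_Ioi (hf : Differentiable ℝ f) (hc : 0 < c)
    (hderiv : ∀ᶠ x in atTop, c ≤ deriv f x) (hb : RapidDecay b) (k : ℕ) :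
    (fun x => (1 + ‖x‖) ^ k • Real.exp (f x) • ∫ t in Ioi x, Real.exp (-f t) • b t)
      =O[atTop] (1 : ℝ → ℝ) := by
  obtain ⟨C, hC⟩ := hb k
  refine IsBigO.of_bound (C / c) ?_
  filter_upwards [eventually_ge_atTop 0, eventually_forall_ge_atTop.2 hderiv] with x hx hderivx
  have hb (t : ℝ) (ht : t > x) : ‖b t‖ ≤ C / (1 + ‖x‖) ^ k := by
    rw [le_div_iff₀' (by positivity)]
    refine le_trans ?_ (hC t)
    gcongr
    rw [Real.norm_of_nonneg hx, Real.norm_of_nonneg (hx.trans ht.le)]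
    exact ht.le
  calc ‖(1 + ‖x‖) ^ k • Real.exp (f x) • ∫ t in Ioi x, Real.exp (-f t) • b t‖
      ≤ (1 + ‖x‖) ^ k * (C / (1 + ‖x‖) ^ k / c) := by
        rw [norm_smul, Real.norm_of_nonneg (by positivity)]
        gcongr
        exact norm_exp_smul_integral_Ioi_le hf hc hderivx hb
    _ = C / c * ‖(1 : ℝ → ℝ) x‖ := by
        simp only [Pi.one_apply, norm_one]
        field_simp

end HalfLine

/-- A potential is confining if its slope points outwards and is bounded away from zero near both
ends of the line; then `e^{-f}` decays at least exponentially. -/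
structure IsConfining (f : ℝ → ℝ) : Prop where
  exists_le_deriv : ∃ c > 0, ∀ᶠ x in atTop, c ≤ deriv f x
  exists_deriv_le_neg : ∃ c > 0, ∀ᶠ x in atBot, deriv f x ≤ -c

namespace IsConfining

variable {E : Type*} [NormedAddCommGroup E] [NormedSpace ℝ E] {f : ℝ → ℝ} {b : ℝ → E}

theorem of_tendsto_deriv (htop : Tendsto (deriv f) atTop atTop)
    (hbot : Tendsto (deriv f) atBot atBot) : IsConfining f :=
  ⟨⟨1, one_pos, htop.eventually_ge_atTop 1⟩, ⟨1, one_pos, hbot.eventually_le_atBot (-1)⟩⟩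

theorem exists_le_deriv_comp_neg (hconf : IsConfining f) :
    ∃ c > 0, ∀ᶠ x in atTop, c ≤ deriv (fun t => f (-t)) x := by
  obtain ⟨c, hc, hderiv⟩ := hconf.exists_deriv_le_neg
  refine ⟨c, hc, (tendsto_neg_atTop_atBot.eventually hderiv).mono fun x hx => ?_⟩
  rw [deriv_comp_neg]
  linarith

theorem tendsto_cocompact (hconf : IsConfining f) (hf : Differentiable ℝ f) :
    Tendsto f (cocompact ℝ) atTop := by
  obtain ⟨c, hc, hderiv⟩ := hconf.exists_le_deriv
  obtain ⟨d, hd, hderiv_neg⟩ := hconf.exists_le_deriv_comp_neg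
  have hneg : Tendsto (fun x => f (-x)) atTop atTop :=
    tendsto_atTop_of_eventually_le_deriv (hf.comp differentiable_neg) hd hderiv_neg
  rw [cocompact_eq_atBot_atTop]
  exact .sup (by simpa [Function.comp_def] using hneg.comp tendsto_neg_atBot_atTop)
    (tendsto_atTop_of_eventually_le_deriv hf hc hderiv)

theorem integrable_exp_neg_smul (hconf : IsConfining f) (hf : Differentiable ℝ f)
    (hb : Integrable b) : Integrable fun t => Real.exp (-f t) • b t := by
  obtain ⟨x₀, hx₀⟩ := hf.continuous.exists_forall_le (hconf.tendsto_cocompact hf)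
  refine hb.bdd_smul (Real.exp (-f x₀))
    (Real.continuous_exp.comp hf.continuous.neg).aestronglyMeasurable
    (Eventually.of_forall fun t => ?_)
  rw [Real.norm_of_nonneg (Real.exp_pos _).le, Real.exp_le_exp]
  exact neg_le_neg (hx₀ t)

theorem rapidDecay_twistedPrimitive (hconf : IsConfining f) (hf : Differentiable ℝ f)
    (hb : RapidDecay b) (hcont : Continuous (twistedPrimitive f b))
    (hint : Integrable fun t => Real.exp (-f t) • b t)
    (hzero : ∫ t, Real.exp (-f t) • b t = 0) : RapidDecay (twistedPrimitive f b) := by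
  intro k
  obtain ⟨c, hc, hderiv⟩ := hconf.exists_le_deriv
  obtain ⟨d, hd, hderiv_neg⟩ := hconf.exists_le_deriv_comp_neg
  have htop : (fun x => (1 + ‖x‖) ^ k • twistedPrimitive f b x) =O[atTop] (1 : ℝ → ℝ) := by
    simp only [twistedPrimitive_eq_neg_integral_Ioi hint hzero, smul_neg]
    exact (isBigO_atTop_pow_smul_exp_smul_integral_Ioi hf hc hderiv hb k).neg_left
  have hbot : (fun x => (1 + ‖x‖) ^ k • twistedPrimitive f b x) =O[atBot] (1 : ℝ → ℝ) := by
    have hrefl := (isBigO_atTop_pow_smul_exp_smul_integral_Ioi (hf.comp differentiable_neg) hd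
      hderiv_neg hb.comp_neg k).comp_tendsto tendsto_neg_atBot_atTop
    refine hrefl.congr_left fun x => ?_
    simp only [Function.comp_apply, norm_neg, neg_neg, twistedPrimitive,
      integral_comp_neg_Ioi (-x) fun t => Real.exp (-f t) • b t]
  have hweighted : Continuous fun x => (1 + ‖x‖) ^ k • twistedPrimitive f b x := by fun_prop
  obtain ⟨C, hC⟩ := isBounded_iff_forall_norm_le.1
    (hweighted.isBounded_range_iff_isBigO_atTop_atBot.2 ⟨htop, hbot⟩)
  refine ⟨C, fun x => ?_⟩
  have hx := hC _ (mem_range_self x)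
  rwa [norm_smul, Real.norm_of_nonneg (by positivity)] at hx

theorem exists_twistedDifferential_eq [CompleteSpace E] (hconf : IsConfining f)
    (hf : f.HasTemperateGrowth) (β : 𝓢(ℝ, E)) (hzero : ∫ t, Real.exp (-f t) • β t = 0) :
    ∃ α : 𝓢(ℝ, E), twistedDifferential f α = β := by
  have hdiff : Differentiable ℝ f := (contDiff_infty_iff_deriv.1 hf.1).1
  have hint := hconf.integrable_exp_neg_smul hdiff β.integrable
  have hsmooth := contDiff_twistedPrimitive hf.1 (β.smooth ⊤) hint
  have hderiv : deriv (twistedPrimitive f β) = deriv f • twistedPrimitive f β + β :=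
    funext fun x => (hasDerivAt_twistedPrimitive hdiff β.continuous hint x).deriv
  obtain ⟨α, hα⟩ := exists_schwartzMap_coe_eq_of_deriv_eq β (hasTemperateGrowth_deriv hf) hsmooth
    hderiv <| hconf.rapidDecay_twistedPrimitive hdiff (rapidDecay_schwartzMap β)
      hsmooth.continuous hint hzero
  refine ⟨α, funext fun x => ?_⟩
  simp only [twistedDifferential, hα, hderiv, Pi.add_apply, Pi.smul_apply', add_sub_cancel_left]

theorem integral_exp_neg_smul_twistedDifferential (hconf : IsConfining f)
    (hf : Differentiable ℝ f) {α β : 𝓢(ℝ, E)} (h : twistedDifferential f α = β) :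
    ∫ t, Real.exp (-f t) • β t = 0 :=
  integral_eq_zero_of_hasDerivAt_of_integrable
    (fun x => h ▸ hasDerivAt_exp_neg_smul (hf x) α.differentiableAt)
    (hconf.integrable_exp_neg_smul hf β.integrable)
    (hconf.integrable_exp_neg_smul hf α.integrable)

end IsConfining

theorem exists_schwartzMap_integral_smul_eq {E : Type*} [NormedAddCommGroup E] [NormedSpace ℝ E]
    [CompleteSpace E] {w : ℝ → ℝ} (hw : Continuous w) (hpos : ∀ t, 0 < w t) (v : E) :
    ∃ β : 𝓢(ℝ, E), ∫ t, w t • β t = v := by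
  let φ : ContDiffBump (0 : ℝ) := default
  have hmass : 0 < ∫ t, w t * φ t :=
    Continuous.integral_pos_of_hasCompactSupport_nonneg_nonzero (x := 0) (hw.mul φ.continuous)
      φ.hasCompactSupport.mul_left (fun t => mul_nonneg (hpos t).le φ.nonneg)
      (mul_pos (hpos 0) (φ.pos_of_mem_ball (Metric.mem_ball_self φ.rOut_pos))).ne'
  let u : E := (∫ t, w t * φ t)⁻¹ • v
  have hsupp : HasCompactSupport fun t => φ t • u := φ.hasCompactSupport.smul_right
  refine ⟨hsupp.toSchwartzMap (φ.contDiff.smul contDiff_const), ?_⟩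
  simp only [HasCompactSupport.toSchwartzMap_toFun, smul_smul]
  rw [integral_smul_const, smul_inv_smul₀ hmass.ne']

theorem range_twisted_differential_general {E : Type*} [NormedAddCommGroup E] [NormedSpace ℝ E]
    [CompleteSpace E] {f : ℝ → ℝ} (hf : f.HasTemperateGrowth) (hconf : IsConfining f) :
    (∀ β : 𝓢(ℝ, E), (∃ α : 𝓢(ℝ, E), twistedDifferential f α = β) ↔
      ∫ t, Real.exp (-f t) • β t = 0) ∧
    ∀ v : E, ∃ β : 𝓢(ℝ, E), ∫ t, Real.exp (-f t) • β t = v := by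
  have hdiff : Differentiable ℝ f := (contDiff_infty_iff_deriv.1 hf.1).1
  exact ⟨fun β => ⟨fun ⟨_, hα⟩ => hconf.integral_exp_neg_smul_twistedDifferential hdiff hα,
    hconf.exists_twistedDifferential_eq hf β⟩,
    exists_schwartzMap_integral_smul_eq (Real.continuous_exp.comp hdiff.continuous.neg)
      fun _ => Real.exp_pos _⟩

section Quadratic

variable (τ σ κ : ℝ)

theorem deriv_quadratic :
    deriv (fun x : ℝ => τ / 2 * x ^ 2 + σ * x + κ) = fun x => τ * x + σ := by
  ext x
  refine HasDerivAt.deriv ?_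
  convert! ((((hasDerivAt_id x).pow 2).const_mul (τ / 2)).add
    ((hasDerivAt_id x).const_mul σ)).add_const κ using 1
  simp only [id, Nat.cast_ofNat, mul_one]
  ring

theorem hasTemperateGrowth_quadratic :
    (fun x : ℝ => τ / 2 * x ^ 2 + σ * x + κ).HasTemperateGrowth := by
  fun_prop

variable {τ} in
theorem isConfining_quadratic (hτ : 0 < τ) :
    IsConfining fun x : ℝ => τ / 2 * x ^ 2 + σ * x + κ := by
  apply IsConfining.of_tendsto_deriv <;> rw [deriv_quadratic]
  · exact tendsto_atTop_add_const_right _ _ (tendsto_id.const_mul_atTop hτ)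
  · exact tendsto_atBot_add_const_right _ _ (tendsto_id.const_mul_atBot hτ)

end Quadratic

/-- For the quadratic `f(x) = (τ/2)x² + σx + κ` with `τ > 0` and β ∈ 𝒮,
the equation `α′ − f′·α = β` has a Schwartz solution α iff `∫_ℝ e^{−f(t)}·β(t) dt = 0`.
Moreover the functional `β ↦ ∫ e^{−f}·β` is surjective onto ℝ, so it induces a linear
isomorphism `𝒮 / d_f(𝒮) ≅ ℝ`: the first cohomology of `(𝒮 → 𝒮, d_f)` is one-dimensional. -/
theorem range_twisted_differential (τ σ κ : ℝ) (hτ : 0 < τ) (f : ℝ → ℝ)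
    (hf : ∀ x, f x = τ / 2 * x ^ 2 + σ * x + κ) :
    (∀ β : SchwartzMap ℝ ℝ,
      (∃ α : SchwartzMap ℝ ℝ,
        ∀ x : ℝ, deriv (⇑α) x - (τ * x + σ) * α x = β x) ↔
        (∫ t : ℝ, Real.exp (-(f t)) * β t) = 0) ∧
    (∀ r : ℝ, ∃ β : SchwartzMap ℝ ℝ, (∫ t : ℝ, Real.exp (-(f t)) * β t) = r) := by
  obtain rfl : f = fun x => τ / 2 * x ^ 2 + σ * x + κ := funext hf
  simpa only [funext_iff, twistedDifferential, deriv_quadratic, smul_eq_mul] using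
    range_twisted_differential_general (E := ℝ) (hasTemperateGrowth_quadratic τ σ κ)
      (isConfining_quadratic σ κ hτ)
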